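/- Let χᵢ be primitive Dirichlet characters mod rᵢ for i = 1,2,3,4, let r = lcm(r₁,r₂,r₃,r₄), and let χ₀ be the principal character mod q. Then Σ_{q ≤ P, r | q} |Z(q, χ₀χ₁, χ₀χ₂, χ₀χ₃, χ₀χ₄)| / φ(q)⁴ ≪ r^{−1+ε} (log P)^c for some absolute constant c > 0 and any ε > 0. -/

import Mathlib

open Classical

noncomputable def eC (t : ℝ) : ℂ := Complex.exp (2 * Real.pi * Complex.I * t)

/-- `C_k(h, ψ)` for a Dirichlet character `ψ` mod `q`. -/
noncomputable def CkChar (q : ℕ) (ψ : DirichletCharacter ℂ q) (k h : ℕ) : ℂ :=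
  ∑ l ∈ Finset.Icc 1 q, ψ (l : ZMod q) * eC ((h : ℝ) * (l : ℝ) ^ k / q)

noncomputable def Zchar (q : ℕ) (N : ℤ) (ψ₂ ψ₃ ψ₄ ψ₅ : DirichletCharacter ℂ q) : ℂ :=
  ∑ h ∈ (Finset.Icc 1 q).filter (fun h => Nat.Coprime h q),
    eC (-(N : ℝ) * h / q) *
      (CkChar q ψ₂ 2 h * CkChar q ψ₃ 3 h * CkChar q ψ₄ 4 h * CkChar q ψ₅ 5 h)

/-!
Write `T` for the number of `u ∈ (ℤ/q)ˣ` with `u ^ k = 1`. Substituting `l ↦ a l` shows that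
`‖C_k(h, ψ)‖` does not change when `h` is multiplied by a `k`-th power `a ^ k`; averaging over `a`
and completing the sum to all residues `h`, Parseval gives `‖C_k(h, ψ)‖ ≤ √q T` for `(h, q) = 1`.
The units modulo a prime power have a cyclic subgroup of index at most two, so that each prime
contributes a factor at most `2 k ≤ 2 ^ 4` to `T` and `T ≤ d(q) ^ 4`. As `q ≤ φ(q) d(q)`, this
yields `|Z| / φ(q) ^ 4 ≤ d(q) ^ 19 / q`.

Since `d` is submultiplicative, `∑_{t ≤ n} d(t) ^ (m + 1) / t ≤ (∑_{t ≤ n} d(t) ^ m / t) ^ 2`, so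
all these moments are bounded by powers of `1 + log n`. Writing `q = r t`, the sum over `t` gives
the power of `log P`, and a single term of a high moment gives the divisor bound `d(r) ≪ r ^ ε`.
-/

open Finset AddChar
open scoped Nat

/-! ### Roots of unity modulo `q` -/

theorem card_fiber_le_card_ker {G H : Type*} [Group G] [Fintype G] [Group H]
    [DecidableEq H] (f : G →* H) (y : H) : #{x | f x = y} ≤ Nat.card f.ker := by
  rcases ({x | f x = y} : Finset G).eq_empty_or_nonempty with h | ⟨a, ha⟩
  · simp [h]
  · obtain rfl : f a = y := by simpa using ha
    rw [← Nat.card_congr (f.fiberEquivKer a), Nat.card_eq_card_toFinset]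
    exact (congrArg card (by ext; simp)).le

theorem sum_comp_monoidHom_le {G H : Type*} [Group G] [Fintype G] [Group H] [Fintype H]
    (f : G →* H) {F : H → ℝ} (hF : ∀ y, 0 ≤ F y) :
    ∑ x, F (f x) ≤ Nat.card f.ker * ∑ y, F y := by
  rw [← sum_fiberwise' univ f F, mul_sum]
  refine sum_le_sum fun y _ ↦ ?_
  rw [sum_const, nsmul_eq_mul]
  exact mul_le_mul_of_nonneg_right (mod_cast card_fiber_le_card_ker f y) (hF y)

theorem card_ker_powMonoidHom_le {G : Type*} [CommGroup G] [Finite G] (H : Subgroup G)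
    [IsCyclic H] {k : ℕ} (hk : 0 < k) :
    Nat.card (powMonoidHom k : G →* G).ker ≤ k * H.index := by
  set K := (powMonoidHom k : G →* G).ker
  have cyclic : IsCyclic ↥(H ⊓ K) := Subgroup.isCyclic_of_le inf_le_left
  have card_inf : Nat.card ↥(H ⊓ K) ≤ k := by
    rw [← IsCyclic.exponent_eq_card]
    exact Nat.le_of_dvd hk
      (Monoid.exponent_dvd_of_forall_pow_eq_one fun x ↦ Subtype.ext x.2.2)
  have relIndex_le : H.relIndex K ≤ H.index :=
    Nat.le_of_dvd (Nat.pos_of_ne_zero Subgroup.index_ne_zero_of_finite)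
      (H.relIndex_dvd_index_of_normal K)
  calc Nat.card K = Nat.card ↥(H ⊓ K) * H.relIndex K := by
        rw [← Subgroup.relIndex_bot_left, ← Subgroup.relIndex_bot_left,
          ← Subgroup.inf_relIndex_right H K,
          Subgroup.relIndex_mul_relIndex _ _ _ bot_le inf_le_right]
    _ ≤ k * H.index := Nat.mul_le_mul card_inf relIndex_le

theorem exists_isCyclic_index_le_two_units_zmod_prime_pow {p : ℕ} (hp : p.Prime) (n : ℕ) :
    ∃ H : Subgroup (ZMod (p ^ n))ˣ, IsCyclic H ∧ H.index ≤ 2 := by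
  have of_isCyclic (_ : IsCyclic (ZMod (p ^ n))ˣ) :
      ∃ H : Subgroup (ZMod (p ^ n))ˣ, IsCyclic H ∧ H.index ≤ 2 :=
    ⟨⊤, inferInstance, by simp⟩
  by_cases hp2 : p = 2
  · subst hp2
    obtain hn | ⟨m, rfl⟩ : n ≤ 2 ∨ ∃ m, n = m + 2 :=
      (le_total n 2).imp_right Nat.exists_eq_add_of_le'
    · exact of_isCyclic ((ZMod.isCyclic_units_two_pow_iff n).2 hn)
    have isUnit_five : IsUnit (5 : ZMod (2 ^ (m + 2))) := by
      exact_mod_cast (ZMod.isUnit_iff_coprime 5 _).2 (Nat.Coprime.pow_right _ (by norm_num))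
    obtain ⟨u, hu⟩ := isUnit_five
    have order_u : orderOf u = 2 ^ m := by rw [← orderOf_units, hu, ZMod.orderOf_five]
    refine ⟨Subgroup.zpowers u, inferInstance, le_of_eq ?_⟩
    have h := (Subgroup.zpowers u).card_mul_index
    rw [Nat.card_zpowers, order_u, Nat.card_eq_fintype_card, ZMod.card_units_eq_totient,
      Nat.totient_prime_pow_succ hp] at h
    exact Nat.eq_of_mul_eq_mul_left (by positivity) (h.trans (by ring))
  · exact of_isCyclic (ZMod.isCyclic_units_of_prime_pow p hp hp2 n)

theorem card_rootsOfUnity_zmod_prime_pow_le {p : ℕ} (hp : p.Prime) (n : ℕ) {k : ℕ} (hk : 0 < k) :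
    Nat.card (rootsOfUnity k (ZMod (p ^ n))) ≤ 2 * k := by
  have : NeZero (p ^ n) := ⟨pow_ne_zero _ hp.ne_zero⟩
  obtain ⟨H, _, hH⟩ := exists_isCyclic_index_le_two_units_zmod_prime_pow hp n
  rw [rootsOfUnity_eq_ker, mul_comm]
  exact (card_ker_powMonoidHom_le H hk).trans (Nat.mul_le_mul_left k hH)

theorem card_rootsOfUnity_prod (k : ℕ) (M N : Type*) [CommMonoid M] [CommMonoid N] :
    Nat.card (rootsOfUnity k (M × N)) =
      Nat.card (rootsOfUnity k M) * Nat.card (rootsOfUnity k N) := by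
  rw [← Nat.card_prod]
  refine Nat.card_congr ((MulEquiv.prodUnits.toEquiv.subtypeEquiv fun u ↦ ?_).trans
    ((rootsOfUnity k M).prodEquiv (rootsOfUnity k N)).toEquiv)
  simp only [Subgroup.mem_prod, mem_rootsOfUnity, Units.ext_iff, Prod.ext_iff]
  rfl

theorem card_rootsOfUnity_zmod_mul {m n : ℕ} (h : m.Coprime n) (k : ℕ) :
    Nat.card (rootsOfUnity k (ZMod (m * n))) =
      Nat.card (rootsOfUnity k (ZMod m)) * Nat.card (rootsOfUnity k (ZMod n)) := by
  rw [← card_rootsOfUnity_prod]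
  exact Nat.card_congr
    ((ZMod.chineseRemainder h).toMulEquiv.restrictRootsOfUnity k).toEquiv

theorem card_rootsOfUnity_zmod_le_card_divisors_pow {k m : ℕ} (hk : 0 < k) (hkm : 2 * k ≤ 2 ^ m)
    {q : ℕ} (hq : q ≠ 0) : Nat.card (rootsOfUnity k (ZMod q)) ≤ #q.divisors ^ m := by
  induction q using Nat.recOnPosPrimePosCoprime with
  | prime_pow p n hp hn =>
    rw [Nat.divisors_prime_pow hp, card_map, card_range]
    calc Nat.card (rootsOfUnity k (ZMod (p ^ n))) ≤ 2 * k :=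
          card_rootsOfUnity_zmod_prime_pow_le hp n hk
      _ ≤ 2 ^ m := hkm
      _ ≤ (n + 1) ^ m := by gcongr; lia
  | zero => contradiction
  | one => exact (Finite.card_subtype_le _).trans (by simp)
  | coprime a b _ _ hab iha ihb =>
    rw [card_rootsOfUnity_zmod_mul hab, hab.card_divisors_mul, mul_pow]
    exact Nat.mul_le_mul (iha (by lia)) (ihb (by lia))

/-! ### Moments of the divisor function -/

theorem le_totient_mul_card_divisors (n : ℕ) : n ≤ φ n * #n.divisors := by
  rcases n.eq_zero_or_pos with rfl | hn
  · simp
  calc n = ∑ d ∈ n.divisors, φ d := n.sum_totient.symm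
    _ ≤ #n.divisors • φ n := sum_le_card_nsmul _ _ _ fun d hd ↦
        Nat.le_of_dvd (Nat.totient_pos.2 hn) (Nat.totient_dvd_of_dvd (Nat.dvd_of_mem_divisors hd))
    _ = φ n * #n.divisors := by rw [smul_eq_mul, mul_comm]

theorem card_divisors_pow_div_mul_le (m a b : ℕ) :
    (#(a * b).divisors : ℝ) ^ m / (a * b : ℕ) ≤
      ((#a.divisors : ℝ) ^ m / a) * ((#b.divisors : ℝ) ^ m / b) := by
  have card_mul_le : #(a * b).divisors ≤ #a.divisors * #b.divisors := by
    rw [Nat.divisors_mul]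
    exact card_mul_le
  rw [div_mul_div_comm, ← mul_pow, Nat.cast_mul]
  gcongr
  exact_mod_cast card_mul_le

theorem sum_card_divisors_mul_le_sq (n : ℕ) {f : ℕ → ℝ} (hf : ∀ a, 0 ≤ f a)
    (hmul : ∀ a b, f (a * b) ≤ f a * f b) :
    ∑ t ∈ Icc 1 n, #t.divisors * f t ≤ (∑ t ∈ Icc 1 n, f t) ^ 2 := by
  calc ∑ t ∈ Icc 1 n, #t.divisors * f t
      ≤ ∑ t ∈ Icc 1 n, ∑ x ∈ Icc 1 n ×ˢ Icc 1 n with x.1 * x.2 = t, f x.1 * f x.2 := by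
        refine sum_le_sum fun t ht ↦ ?_
        obtain ⟨ht0, htn⟩ := mem_Icc.1 ht
        have antidiagonal_eq : t.divisorsAntidiagonal =
            {x ∈ Icc 1 n ×ˢ Icc 1 n | x.1 * x.2 = t} :=
          Nat.divisorsAntidiagonal_eq_prod_filter_of_le (Nat.pos_iff_ne_zero.1 ht0) htn
        have card_antidiagonal : #t.divisorsAntidiagonal = #t.divisors := by
          rw [← Nat.map_div_right_divisors, card_map]
        rw [← antidiagonal_eq, ← card_antidiagonal, ← nsmul_eq_mul]
        refine card_nsmul_le_sum _ _ _ fun x hx ↦ ?_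
        rw [← (Nat.mem_divisorsAntidiagonal.1 hx).1]
        exact hmul x.1 x.2
    _ ≤ ∑ x ∈ Icc 1 n ×ˢ Icc 1 n, f x.1 * f x.2 :=
        sum_fiberwise_le_sum_of_sum_fiber_nonneg fun _ _ ↦
          sum_nonneg fun _ _ ↦ mul_nonneg (hf _) (hf _)
    _ = (∑ t ∈ Icc 1 n, f t) ^ 2 := by rw [sq, sum_mul_sum, sum_product]

theorem sum_card_divisors_pow_div_le (n m : ℕ) :
    ∑ t ∈ Icc 1 n, (#t.divisors : ℝ) ^ m / t ≤ (1 + Real.log n) ^ 2 ^ m := by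
  induction m with
  | zero => simpa [harmonic_eq_sum_Icc] using harmonic_le_one_add_log n
  | succ m ih =>
    calc ∑ t ∈ Icc 1 n, (#t.divisors : ℝ) ^ (m + 1) / t
        = ∑ t ∈ Icc 1 n, #t.divisors * ((#t.divisors : ℝ) ^ m / t) := by
          simp only [pow_succ', mul_div_assoc]
      _ ≤ (∑ t ∈ Icc 1 n, (#t.divisors : ℝ) ^ m / t) ^ 2 :=
          sum_card_divisors_mul_le_sq n (fun _ ↦ by positivity) (card_divisors_pow_div_mul_le m)
      _ ≤ ((1 + Real.log n) ^ 2 ^ m) ^ 2 := by gcongr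
      _ = (1 + Real.log n) ^ 2 ^ (m + 1) := by rw [← pow_mul, pow_succ]

theorem card_divisors_pow_le (m : ℕ) {n : ℕ} (hn : 0 < n) :
    (#n.divisors : ℝ) ^ m ≤ (2 ^ m)! * Real.exp 1 * (n : ℝ) ^ 2 := by
  have hn' : (0 : ℝ) < n := mod_cast hn
  have : 0 ≤ Real.log n := Real.log_natCast_nonneg n
  have h : (#n.divisors : ℝ) ^ m / n ≤ (2 ^ m)! * Real.exp 1 * n :=
    calc (#n.divisors : ℝ) ^ m / n ≤ ∑ t ∈ Icc 1 n, (#t.divisors : ℝ) ^ m / t :=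
          single_le_sum (f := fun t : ℕ ↦ (#t.divisors : ℝ) ^ m / t) (fun _ _ ↦ by positivity)
            (mem_Icc.2 ⟨hn, le_rfl⟩)
      _ ≤ (1 + Real.log n) ^ 2 ^ m := sum_card_divisors_pow_div_le n m
      _ ≤ (2 ^ m)! * Real.exp (1 + Real.log n) := by
          rw [← div_le_iff₀' (by positivity)]
          exact Real.pow_div_factorial_le_exp _ (by positivity) _
      _ = (2 ^ m)! * Real.exp 1 * n := by rw [Real.exp_add, Real.exp_log hn', mul_assoc]
  rw [div_le_iff₀ hn'] at h
  linarith

theorem exists_card_divisors_le_mul_rpow {ε : ℝ} (hε : 0 < ε) :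
    ∃ C : ℝ, 0 < C ∧ ∀ n : ℕ, (#n.divisors : ℝ) ≤ C * (n : ℝ) ^ ε := by
  obtain ⟨m, hm⟩ := exists_nat_gt (2 / ε)
  have m_pos : (0 : ℝ) < m := (div_pos two_pos hε).trans hm
  refine ⟨((2 ^ m)! * Real.exp 1) ^ (1 / m : ℝ), by positivity, fun n ↦ ?_⟩
  rcases n.eq_zero_or_pos with rfl | hn
  · simp [hε.ne']
  calc (#n.divisors : ℝ) = ((#n.divisors : ℝ) ^ m) ^ (1 / m : ℝ) := by
        rw [one_div, Real.pow_rpow_inv_natCast (by positivity) (by rintro rfl; simp at m_pos)]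
    _ ≤ ((2 ^ m)! * Real.exp 1 * (n : ℝ) ^ 2) ^ (1 / m : ℝ) := by
        gcongr
        exact card_divisors_pow_le m hn
    _ = ((2 ^ m)! * Real.exp 1) ^ (1 / m : ℝ) * (n : ℝ) ^ (2 / m : ℝ) := by
        rw [Real.mul_rpow (by positivity) (by positivity), ← Real.rpow_natCast_mul (by positivity),
          Nat.cast_ofNat, mul_one_div]
    _ ≤ ((2 ^ m)! * Real.exp 1) ^ (1 / m : ℝ) * (n : ℝ) ^ ε := by
        have two_div_le : 2 / (m : ℝ) ≤ ε := (div_lt_comm₀ hε m_pos).1 hm |>.le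
        gcongr
        exact_mod_cast hn

theorem exists_sum_card_divisors_mul_pow_div_le (m : ℕ) {ε : ℝ} (hε : 0 < ε) :
    ∃ C : ℝ, 0 < C ∧ ∀ r n : ℕ, 0 < r →
      ∑ t ∈ Icc 1 n, (#(r * t).divisors : ℝ) ^ m / (r * t : ℕ) ≤
        C * (r : ℝ) ^ (-1 + ε) * (1 + Real.log n) ^ 2 ^ m := by
  obtain ⟨C, hC, card_le⟩ := exists_card_divisors_le_mul_rpow (ε := ε / (m + 1)) (by positivity)
  refine ⟨C ^ m, by positivity, fun r n hr ↦ ?_⟩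
  have hr1 : (1 : ℝ) ≤ r := mod_cast hr
  have pow_div_le : (#r.divisors : ℝ) ^ m / r ≤ C ^ m * (r : ℝ) ^ (-1 + ε) :=
    calc (#r.divisors : ℝ) ^ m / r ≤ (C * (r : ℝ) ^ (ε / (m + 1))) ^ m / r := by
          gcongr
          exact card_le r
      _ = C ^ m * (r : ℝ) ^ (ε / (m + 1) * m) / r := by
          rw [mul_pow, ← Real.rpow_mul_natCast (by positivity)]
      _ ≤ C ^ m * (r : ℝ) ^ ε / r := by
          gcongr
          rw [div_mul_eq_mul_div, div_le_iff₀ (by positivity)]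
          linarith
      _ = C ^ m * (r : ℝ) ^ (-1 + ε) := by
          rw [Real.rpow_add (by positivity), Real.rpow_neg_one]
          ring
  calc ∑ t ∈ Icc 1 n, (#(r * t).divisors : ℝ) ^ m / (r * t : ℕ)
      ≤ ∑ t ∈ Icc 1 n, (#r.divisors : ℝ) ^ m / r * ((#t.divisors : ℝ) ^ m / t) :=
        sum_le_sum fun t _ ↦ card_divisors_pow_div_mul_le m r t
    _ = (#r.divisors : ℝ) ^ m / r * ∑ t ∈ Icc 1 n, (#t.divisors : ℝ) ^ m / t := by
        rw [mul_sum]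
    _ ≤ C ^ m * (r : ℝ) ^ (-1 + ε) * (1 + Real.log n) ^ 2 ^ m := by
        gcongr
        exact sum_card_divisors_pow_div_le n m

/-! ### Gauss sums of powers -/

section PowGaussSum

theorem norm_mulChar_unit {M : Type*} [CommMonoid M] [Finite Mˣ] (χ : MulChar M ℂ) (u : Mˣ) :
    ‖χ u‖ = 1 := by
  refine Complex.norm_eq_one_of_pow_eq_one (n := Nat.card Mˣ) ?_ Nat.card_pos.ne'
  rw [← map_pow, ← Units.val_pow_eq_pow_val, pow_card_eq_one', Units.val_one, map_one]

theorem sum_mulChar_mul_eq_sum_units {M R' : Type*} [CommMonoid M] [Fintype M] [Fintype Mˣ]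
    [CommSemiring R'] (χ : MulChar M R') (f : M → R') :
    ∑ x, χ x * f x = ∑ u : Mˣ, χ u * f u := by
  refine (sum_of_injOn (Units.val : Mˣ → M) Units.val_injective.injOn (by simp) ?_
    fun _ _ ↦ rfl).symm
  intro x _ hx
  rw [χ.map_nonunit (fun ⟨u, hu⟩ ↦ hx ⟨u, by simp, hu⟩), zero_mul]

variable {R : Type*} [CommRing R] [Fintype R]

/-- The Gauss sum `∑ χ(x) ψ(x ^ k)` of a multiplicative and an additive character, twisted by a
`k`-th power; for `k = 1` it is `gaussSum χ ψ`. The sum `C_k(h, χ)` is the case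
`ψ(x) = e(h x / q)` on `ZMod q`. -/
noncomputable def powGaussSum (χ : MulChar R ℂ) (ψ : AddChar R ℂ) (k : ℕ) : ℂ :=
  ∑ x, χ x * ψ (x ^ k)

theorem norm_powGaussSum_mulShift_pow (χ : MulChar R ℂ) (ψ : AddChar R ℂ) (k : ℕ) (a : Rˣ) :
    ‖powGaussSum χ (ψ.mulShift (a ^ k : Rˣ)) k‖ = ‖powGaussSum χ ψ k‖ := by
  have substitution : powGaussSum χ ψ k = χ a * powGaussSum χ (ψ.mulShift (a ^ k : Rˣ)) k := by
    rw [powGaussSum, powGaussSum, mul_sum, ← Equiv.sum_comp a.mulLeft]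
    refine sum_congr rfl fun x _ ↦ ?_
    rw [Units.mulLeft_apply, map_mul, mul_pow, mulShift_apply, Units.val_pow_eq_pow_val, mul_assoc]
  rw [substitution, norm_mul, norm_mulChar_unit, one_mul]

theorem sum_norm_sq_sum_mul_mulShift {ι : Type*} [Fintype ι] {ψ : AddChar R ℂ}
    (hψ : ψ.IsPrimitive) (c : ι → ℂ) {r : ι → R} (hr : r.Injective) :
    ∑ h, ‖∑ i, c i * ψ.mulShift h (r i)‖ ^ 2 = Fintype.card R * ∑ i, ‖c i‖ ^ 2 := by
  have expand (h : R) : ((‖∑ i, c i * ψ.mulShift h (r i)‖ ^ 2 : ℝ) : ℂ) =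
      ∑ i, ∑ j, c i * starRingEnd ℂ (c j) * ψ (h * (r i - r j)) := by
    rw [Complex.ofReal_pow, ← Complex.mul_conj', map_sum, sum_mul_sum]
    refine sum_congr rfl fun i _ ↦ sum_congr rfl fun j _ ↦ ?_
    rw [map_mul (starRingEnd ℂ), ← map_neg_eq_conj, mul_mul_mul_comm, ← map_add_eq_mul,
      mulShift_apply, ← sub_eq_add_neg]
  have orthogonality (i j : ι) :
      ∑ h, ψ (h * (r i - r j)) = if i = j then (Fintype.card R : ℂ) else 0 := by
    simp [sum_mulShift _ hψ, sub_eq_zero, hr.eq_iff]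
  apply Complex.ofReal_injective
  calc ((∑ h, ‖∑ i, c i * ψ.mulShift h (r i)‖ ^ 2 : ℝ) : ℂ)
      = ∑ i, ∑ j, c i * starRingEnd ℂ (c j) * ∑ h, ψ (h * (r i - r j)) := by
        simp_rw [Complex.ofReal_sum, expand, mul_sum]
        rw [sum_comm]
        exact sum_congr rfl fun _ _ ↦ sum_comm
    _ = ∑ i, c i * starRingEnd ℂ (c i) * Fintype.card R := by
        simp [orthogonality]
    _ = ((Fintype.card R * ∑ i, ‖c i‖ ^ 2 : ℝ) : ℂ) := by
        simp [Complex.mul_conj', mul_sum, mul_comm]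

theorem sum_norm_sq_powGaussSum_mulShift_le (χ : MulChar R ℂ) {ψ : AddChar R ℂ}
    (hψ : ψ.IsPrimitive) (k : ℕ) :
    ∑ h, ‖powGaussSum χ (ψ.mulShift h) k‖ ^ 2 ≤
      Fintype.card R * (Nat.card (rootsOfUnity k R) * Fintype.card Rˣ) := by
  set T := Nat.card (rootsOfUnity k R) with hT
  have card_fiber_le (v : Rˣ) : #{u : Rˣ | u ^ k = v} ≤ T := by
    rw [hT, rootsOfUnity_eq_ker]
    exact card_fiber_le_card_ker (powMonoidHom k) v
  have norm_fiber_le (v : Rˣ) : ‖∑ u : Rˣ with u ^ k = v, χ u‖ ≤ #{u : Rˣ | u ^ k = v} := by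
    simpa [norm_mulChar_unit] using norm_sum_le {u : Rˣ | u ^ k = v} fun u ↦ χ u
  have group_by_power (h : R) : powGaussSum χ (ψ.mulShift h) k =
      ∑ v : Rˣ, (∑ u : Rˣ with u ^ k = v, χ u) * ψ.mulShift h v := by
    rw [powGaussSum, sum_mulChar_mul_eq_sum_units χ fun x ↦ ψ.mulShift h (x ^ k),
      ← sum_fiberwise univ fun u : Rˣ ↦ u ^ k]
    refine sum_congr rfl fun v _ ↦ ?_
    rw [sum_mul]
    refine sum_congr rfl fun u hu ↦ ?_
    rw [← (mem_filter.1 hu).2, Units.val_pow_eq_pow_val]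
  calc ∑ h, ‖powGaussSum χ (ψ.mulShift h) k‖ ^ 2
      = Fintype.card R * ∑ v : Rˣ, ‖∑ u : Rˣ with u ^ k = v, χ u‖ ^ 2 := by
        simp_rw [group_by_power]
        exact sum_norm_sq_sum_mul_mulShift hψ _ Units.val_injective
    _ ≤ Fintype.card R * ∑ v : Rˣ, T * (#{u : Rˣ | u ^ k = v} : ℝ) := by
        gcongr with v
        rw [sq]
        gcongr
        · exact (norm_fiber_le v).trans (mod_cast card_fiber_le v)
        · exact norm_fiber_le v
    _ = Fintype.card R * (T * Fintype.card Rˣ) := by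
        rw [← mul_sum, ← Nat.cast_sum, ← card_eq_sum_card_fiberwise (by simp), card_univ]

theorem norm_powGaussSum_le (χ : MulChar R ℂ) {ψ : AddChar R ℂ} (hψ : ψ.IsPrimitive) (k : ℕ) :
    ‖powGaussSum χ ψ k‖ ≤ √(Fintype.card R) * Nat.card (rootsOfUnity k R) := by
  set T := Nat.card (rootsOfUnity k R) with hT
  have averaged : Fintype.card Rˣ * ‖powGaussSum χ ψ k‖ ^ 2 ≤
      Fintype.card Rˣ * (Fintype.card R * (T : ℝ) ^ 2) :=
    calc Fintype.card Rˣ * ‖powGaussSum χ ψ k‖ ^ 2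
        = ∑ a : Rˣ, ‖powGaussSum χ (ψ.mulShift (a ^ k : Rˣ)) k‖ ^ 2 := by
          simp only [norm_powGaussSum_mulShift_pow, sum_const, card_univ, nsmul_eq_mul]
      _ ≤ T * ∑ v : Rˣ, ‖powGaussSum χ (ψ.mulShift v) k‖ ^ 2 := by
          rw [hT, rootsOfUnity_eq_ker]
          exact sum_comp_monoidHom_le (powMonoidHom k)
            (F := fun v : Rˣ ↦ ‖powGaussSum χ (ψ.mulShift v) k‖ ^ 2) fun _ ↦ by positivity
      _ ≤ T * ∑ h : R, ‖powGaussSum χ (ψ.mulShift h) k‖ ^ 2 := by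
          gcongr
          rw [← sum_image (f := fun h ↦ ‖powGaussSum χ (ψ.mulShift h) k‖ ^ 2)
            Units.val_injective.injOn]
          exact sum_le_univ_sum_of_nonneg fun _ ↦ by positivity
      _ ≤ T * (Fintype.card R * (T * Fintype.card Rˣ)) := by
          gcongr
          exact sum_norm_sq_powGaussSum_mulShift_le χ hψ k
      _ = Fintype.card Rˣ * (Fintype.card R * (T : ℝ) ^ 2) := by ring
  refine le_of_sq_le_sq ?_ (by positivity)
  rw [mul_pow, Real.sq_sqrt (Nat.cast_nonneg _)]
  exact le_of_mul_le_mul_left averaged (mod_cast Fintype.card_pos)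

end PowGaussSum

/-! ### The sums `C_k` and `Z` -/

theorem sum_Icc_natCast_zmod {M : Type*} [AddCommMonoid M] (q : ℕ) [NeZero q] (f : ZMod q → M) :
    ∑ l ∈ Icc 1 q, f l = ∑ x, f x := by
  calc ∑ l ∈ Icc 1 q, f l = ∑ l ∈ range q, f (l + 1) := by
        rw [range_eq_Ico, ← Ico_add_one_right_eq_Icc, ← zero_add 1, ← sum_Ico_add']
        simp
    _ = ∑ x, f (x + 1) :=
        sum_nbij' (Nat.cast : ℕ → ZMod q) ZMod.val (by simp) (by simp [ZMod.val_lt])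
          (fun l hl ↦ ZMod.val_cast_of_lt (mem_range.1 hl)) (by simp) (by simp)
    _ = ∑ x, f x := Equiv.sum_comp (Equiv.addRight (1 : ZMod q)) f

theorem CkChar_eq_powGaussSum {q : ℕ} [NeZero q] (ψ : DirichletCharacter ℂ q) (k h : ℕ) :
    CkChar q ψ k h = powGaussSum ψ (ZMod.stdAddChar.mulShift (h : ZMod q)) k := by
  rw [powGaussSum, ← sum_Icc_natCast_zmod]
  refine sum_congr rfl fun l _ ↦ ?_
  have eval := ZMod.stdAddChar_coe (N := q) ((h * l ^ k : ℕ) : ℤ)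
  push_cast at eval
  rw [mulShift_apply, eval, eC]
  push_cast
  ring_nf

theorem isPrimitive_mulShift {R R' : Type*} [CommRing R] [CommMonoid R'] {ψ : AddChar R R'}
    (hψ : ψ.IsPrimitive) {a : R} (ha : IsUnit a) : (ψ.mulShift a).IsPrimitive := fun b hb ↦ by
  rw [mulShift_mulShift]
  exact hψ (mt ha.mul_right_eq_zero.1 hb)

theorem norm_CkChar_le {q h k m : ℕ} [NeZero q] (hk : 0 < k) (hkm : 2 * k ≤ 2 ^ m)
    (ψ : DirichletCharacter ℂ q) (hh : h.Coprime q) :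
    ‖CkChar q ψ k h‖ ≤ √q * (#q.divisors : ℝ) ^ m := by
  have primitive : (ZMod.stdAddChar.mulShift (h : ZMod q)).IsPrimitive :=
    isPrimitive_mulShift (ZMod.isPrimitive_stdAddChar q) ((ZMod.isUnit_iff_coprime h q).2 hh)
  calc ‖CkChar q ψ k h‖ ≤ √q * Nat.card (rootsOfUnity k (ZMod q)) := by
        simpa [CkChar_eq_powGaussSum] using norm_powGaussSum_le ψ primitive k
    _ ≤ √q * (#q.divisors : ℝ) ^ m := by
        gcongr
        exact_mod_cast card_rootsOfUnity_zmod_le_card_divisors_pow hk hkm (NeZero.ne q)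

theorem norm_eC (t : ℝ) : ‖eC t‖ = 1 := by
  rw [eC, ← Complex.norm_exp_ofReal_mul_I (2 * Real.pi * t)]
  push_cast
  ring_nf

theorem card_filter_coprime_Icc_eq_totient (q : ℕ) : #{h ∈ Icc 1 q | h.Coprime q} = φ q := by
  rw [← Nat.filter_coprime_Ico_eq_totient q 1, add_comm 1 q, Ico_add_one_right_eq_Icc]
  simp only [Nat.coprime_comm]

theorem norm_Zchar_le (q : ℕ) (N : ℤ) (ψ₂ ψ₃ ψ₄ ψ₅ : DirichletCharacter ℂ q) :
    ‖Zchar q N ψ₂ ψ₃ ψ₄ ψ₅‖ ≤ φ q * ((q : ℝ) ^ 2 * (#q.divisors : ℝ) ^ 16) := by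
  rcases eq_or_ne q 0 with rfl | hq
  · simp [Zchar]
  have : NeZero q := ⟨hq⟩
  rw [← card_filter_coprime_Icc_eq_totient, ← nsmul_eq_mul]
  refine (norm_sum_le _ _).trans (sum_le_card_nsmul _ _ _ fun h hh ↦ ?_)
  have hcop : h.Coprime q := (mem_filter.1 hh).2
  set B := √q * (#q.divisors : ℝ) ^ 4 with hB
  rw [norm_mul, norm_eC, one_mul, norm_mul, norm_mul, norm_mul]
  calc ‖CkChar q ψ₂ 2 h‖ * ‖CkChar q ψ₃ 3 h‖ * ‖CkChar q ψ₄ 4 h‖ * ‖CkChar q ψ₅ 5 h‖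
      ≤ B * B * B * B := by
        gcongr <;> exact norm_CkChar_le (by norm_num) (by norm_num) _ hcop
    _ = (√q ^ 2) ^ 2 * (#q.divisors : ℝ) ^ 16 := by rw [hB]; ring
    _ = (q : ℝ) ^ 2 * (#q.divisors : ℝ) ^ 16 := by rw [Real.sq_sqrt (Nat.cast_nonneg q)]

theorem norm_Zchar_div_totient_pow_le (q : ℕ) (N : ℤ) (ψ₂ ψ₃ ψ₄ ψ₅ : DirichletCharacter ℂ q) :
    ‖Zchar q N ψ₂ ψ₃ ψ₄ ψ₅‖ / (φ q : ℝ) ^ 4 ≤ (#q.divisors : ℝ) ^ 19 / q := by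
  rcases q.eq_zero_or_pos with rfl | hq
  · simp
  have : (0 : ℝ) < φ q := mod_cast Nat.totient_pos.2 hq
  have le_totient_mul : (q : ℝ) ≤ φ q * #q.divisors := mod_cast le_totient_mul_card_divisors q
  rw [div_le_div_iff₀ (by positivity) (mod_cast hq)]
  calc ‖Zchar q N ψ₂ ψ₃ ψ₄ ψ₅‖ * q
      ≤ φ q * ((q : ℝ) ^ 2 * (#q.divisors : ℝ) ^ 16) * q := by
        gcongr
        exact norm_Zchar_le q N ψ₂ ψ₃ ψ₄ ψ₅
    _ = φ q * (#q.divisors : ℝ) ^ 16 * (q : ℝ) ^ 3 := by ring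
    _ ≤ φ q * (#q.divisors : ℝ) ^ 16 * (φ q * #q.divisors) ^ 3 := by gcongr
    _ = (#q.divisors : ℝ) ^ 19 * (φ q : ℝ) ^ 4 := by ring

theorem one_add_log_floor_le {P : ℝ} (hP : 2 ≤ P) : 1 + Real.log ⌊P⌋₊ ≤ 3 * Real.log P := by
  have half_lt_log_two : 1 / 2 < Real.log 2 := by linarith [Real.log_two_gt_d9]
  have log_two_le : Real.log 2 ≤ Real.log P := by gcongr
  have log_floor_le : Real.log ⌊P⌋₊ ≤ Real.log P :=
    Real.log_le_log (mod_cast Nat.floor_pos.2 (by linarith)) (Nat.floor_le (by linarith))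
  linarith

theorem Z_average_bound_general :
    ∃ c : ℝ, 0 < c ∧ ∀ ε : ℝ, 0 < ε → ∃ C : ℝ, 0 < C ∧
      ∀ (N : ℤ) (r : ℕ), 0 < r →
      ∀ (ψ₂ ψ₃ ψ₄ ψ₅ : ∀ t, DirichletCharacter ℂ (r * t)) (P : ℝ), 2 ≤ P →
      ∑ t ∈ Icc 1 ⌊P⌋₊ with r * t ≤ ⌊P⌋₊,
        ‖Zchar (r * t) N (ψ₂ t) (ψ₃ t) (ψ₄ t) (ψ₅ t)‖ / (φ (r * t) : ℝ) ^ 4 ≤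
      C * (r : ℝ) ^ (-1 + ε) * Real.log P ^ c := by
  refine ⟨(2 ^ 19 : ℕ), by positivity, fun ε hε ↦ ?_⟩
  obtain ⟨C, hC, sum_le⟩ := exists_sum_card_divisors_mul_pow_div_le 19 hε
  refine ⟨C * 3 ^ 2 ^ 19, by positivity, fun N r hr ψ₂ ψ₃ ψ₄ ψ₅ P hP ↦ ?_⟩
  have : 0 ≤ Real.log ⌊P⌋₊ := Real.log_natCast_nonneg _
  calc ∑ t ∈ Icc 1 ⌊P⌋₊ with r * t ≤ ⌊P⌋₊,
        ‖Zchar (r * t) N (ψ₂ t) (ψ₃ t) (ψ₄ t) (ψ₅ t)‖ / (φ (r * t) : ℝ) ^ 4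
      ≤ ∑ t ∈ Icc 1 ⌊P⌋₊ with r * t ≤ ⌊P⌋₊, (#(r * t).divisors : ℝ) ^ 19 / (r * t : ℕ) :=
        sum_le_sum fun t _ ↦ norm_Zchar_div_totient_pow_le _ N _ _ _ _
    _ ≤ ∑ t ∈ Icc 1 ⌊P⌋₊, (#(r * t).divisors : ℝ) ^ 19 / (r * t : ℕ) :=
        sum_le_sum_of_subset_of_nonneg (filter_subset _ _) fun _ _ _ ↦ by positivity
    _ ≤ C * (r : ℝ) ^ (-1 + ε) * (1 + Real.log ⌊P⌋₊) ^ 2 ^ 19 := sum_le r ⌊P⌋₊ hr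
    _ ≤ C * (r : ℝ) ^ (-1 + ε) * (3 * Real.log P) ^ 2 ^ 19 := by
        gcongr
        exact one_add_log_floor_le hP
    _ = C * 3 ^ 2 ^ 19 * (r : ℝ) ^ (-1 + ε) * Real.log P ^ ((2 ^ 19 : ℕ) : ℝ) := by
        rw [Real.rpow_natCast, mul_pow, ← mul_assoc, mul_right_comm C]

/-- Averaged bound for `Z` over levels `q ≤ P` divisible by `r = lcm(r₁,r₂,r₃,r₄)`:
`Σ_{q ≤ P, r ∣ q} |Z(q, χ₀χ₁, χ₀χ₂, χ₀χ₃, χ₀χ₄)|/φ(q)⁴ ≪ r^{-1+ε} (log P)^c`. -/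
theorem Z_average_bound :
    ∃ c : ℝ, 0 < c ∧ ∀ ε : ℝ, 0 < ε → ∃ C : ℝ, 0 < C ∧
      ∀ (N : ℤ) (r₁ r₂ r₃ r₄ : ℕ), 0 < r₁ → 0 < r₂ → 0 < r₃ → 0 < r₄ →
      ∀ (χ₁ : DirichletCharacter ℂ r₁) (χ₂ : DirichletCharacter ℂ r₂)
        (χ₃ : DirichletCharacter ℂ r₃) (χ₄ : DirichletCharacter ℂ r₄),
      χ₁.IsPrimitive → χ₂.IsPrimitive → χ₃.IsPrimitive → χ₄.IsPrimitive →
      ∀ P : ℝ, 2 ≤ P →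
      (∑ t ∈ (Finset.Icc 1 ⌊P⌋₊).filter
          (fun t => Nat.lcm (Nat.lcm r₁ r₂) (Nat.lcm r₃ r₄) * t ≤ ⌊P⌋₊),
        ‖Zchar (Nat.lcm (Nat.lcm r₁ r₂) (Nat.lcm r₃ r₄) * t) N
            (DirichletCharacter.changeLevel
              (((Nat.dvd_lcm_left r₁ r₂).trans (Nat.dvd_lcm_left _ _)).trans
                (dvd_mul_right _ t)) χ₁)
            (DirichletCharacter.changeLevel
              (((Nat.dvd_lcm_right r₁ r₂).trans (Nat.dvd_lcm_left _ _)).trans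
                (dvd_mul_right _ t)) χ₂)
            (DirichletCharacter.changeLevel
              (((Nat.dvd_lcm_left r₃ r₄).trans (Nat.dvd_lcm_right _ _)).trans
                (dvd_mul_right _ t)) χ₃)
            (DirichletCharacter.changeLevel
              (((Nat.dvd_lcm_right r₃ r₄).trans (Nat.dvd_lcm_right _ _)).trans
                (dvd_mul_right _ t)) χ₄)‖ /
          (Nat.totient (Nat.lcm (Nat.lcm r₁ r₂) (Nat.lcm r₃ r₄) * t) : ℝ) ^ 4)
        ≤ C * (Nat.lcm (Nat.lcm r₁ r₂) (Nat.lcm r₃ r₄) : ℝ) ^ (-1 + ε) *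
            Real.log P ^ c := by
  obtain ⟨c, hc, bound⟩ := Z_average_bound_general
  refine ⟨c, hc, fun ε hε ↦ (bound ε hε).imp fun C ⟨hC, h⟩ ↦ ⟨hC, ?_⟩⟩
  intro N r₁ r₂ r₃ r₄ h₁ h₂ h₃ h₄ χ₁ χ₂ χ₃ χ₄ _ _ _ _ P hP
  exact h N _ (Nat.lcm_pos (Nat.lcm_pos h₁ h₂) (Nat.lcm_pos h₃ h₄)) (fun _ ↦ _) (fun _ ↦ _)
    (fun _ ↦ _) (fun _ ↦ _) P hP
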